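/- arXiv:2602.20797 — 3 statements merged into one kernel-verified Lean document; each statement's English description precedes it below -/
import Mathlib

section
/- Let δ₁,…,δ₅ be complex numbers with s₁ = δ₁+δ₂+δ₃+δ₄+δ₅ = 0. If the list (δ₁,…,δ₅) is realizable, then it is persymmetrically realizable, i.e., there exists a 5×5 entrywise nonnegative persymmetric real matrix whose characteristic polynomial over ℂ equals ∏ᵢ₌₁⁵(X−δᵢ). -/
open Matrix Polynomial

namespace ZeroDiagonalFive

/-- The weight of the `2`-cycle through `i` and `j`. -/
def edge {ι : Type*} (A : Matrix ι ι ℝ) (i j : ι) : ℝ := A i j * A j i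

/-- The total weight of the two `3`-cycles through `i`, `j` and `k`. -/
def triangle {ι : Type*} (A : Matrix ι ι ℝ) (i j k : ι) : ℝ :=
  A i j * A j k * A k i + A i k * A k j * A j i

/-- The total weight of the six `4`-cycles through `i`, `j`, `k` and `l`. -/
def quad {ι : Type*} (A : Matrix ι ι ℝ) (i j k l : ι) : ℝ :=
  A i j * A j k * A k l * A l i + A i l * A l k * A k j * A j i +
  (A i j * A j l * A l k * A k i + A i k * A k l * A l j * A j i) +
  (A i k * A k j * A j l * A l i + A i l * A l j * A j k * A k i)

/-- The weight of the `5`-cycle `i → j → k → l → m → i` and of its reverse. -/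
def pentagon {ι : Type*} (A : Matrix ι ι ℝ) (i j k l m : ι) : ℝ :=
  A i j * A j k * A k l * A l m * A m i + A i m * A m l * A l k * A k j * A j i

/-- The sum of `w` over the ten edges of the complete graph on `i, j, k, l, m`. -/
def edgeSum {ι : Type*} (w : ι → ι → ℝ) (i j k l m : ι) : ℝ :=
  w i j + (w k l + w k m + w l m) + (w i k + w i l + w i m) + (w j k + w j l + w j m)

/-- The sum of `w e * w f` over the fifteen pairs of disjoint edges `e`, `f` of the complete graph
on `i, j, k, l, m`. -/
def matchingSum {ι : Type*} (w : ι → ι → ℝ) (i j k l m : ι) : ℝ :=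
  w i j * (w k l + w k m + w l m) +
  (w i k * (w j l + w j m) + w i l * (w j k + w j m) + w i m * (w j k + w j l)) +
  ((w i k + w j k) * w l m + (w i l + w j l) * w k m + (w i m + w j m) * w k l)

/-- The total weight of the `3`-cycles. -/
def triangleSum (A : Matrix (Fin 5) (Fin 5) ℝ) : ℝ :=
  triangle A 2 3 4 + triangle A 1 3 4 + triangle A 1 2 4 + triangle A 1 2 3 +
  triangle A 0 3 4 + triangle A 0 2 4 + triangle A 0 2 3 + triangle A 0 1 4 +
  triangle A 0 1 3 + triangle A 0 1 2

/-- The total weight of the pairs of disjoint cycles of lengths `2` and `3`. -/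
def edgeTriangleSum (A : Matrix (Fin 5) (Fin 5) ℝ) : ℝ :=
  edge A 0 1 * triangle A 2 3 4 + edge A 0 2 * triangle A 1 3 4 +
  edge A 0 3 * triangle A 1 2 4 + edge A 0 4 * triangle A 1 2 3 +
  edge A 1 2 * triangle A 0 3 4 + edge A 1 3 * triangle A 0 2 4 +
  edge A 1 4 * triangle A 0 2 3 + edge A 2 3 * triangle A 0 1 4 +
  edge A 2 4 * triangle A 0 1 3 + edge A 3 4 * triangle A 0 1 2

/-- The total weight of the `4`-cycles. -/
def quadSum (A : Matrix (Fin 5) (Fin 5) ℝ) : ℝ :=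
  quad A 0 1 2 3 + quad A 0 1 2 4 + quad A 0 1 3 4 + quad A 0 2 3 4 + quad A 1 2 3 4

/-- The total weight of the `5`-cycles. -/
def pentagonSum (A : Matrix (Fin 5) (Fin 5) ℝ) : ℝ :=
  pentagon A 0 1 2 3 4 + pentagon A 0 1 2 4 3 + pentagon A 0 1 3 2 4 + pentagon A 0 1 3 4 2 +
  pentagon A 0 1 4 2 3 + pentagon A 0 1 4 3 2 + pentagon A 0 2 1 3 4 + pentagon A 0 2 1 4 3 +
  pentagon A 0 2 3 1 4 + pentagon A 0 2 4 1 3 + pentagon A 0 3 1 2 4 + pentagon A 0 3 2 1 4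

theorem charpoly_eq (A : Matrix (Fin 5) (Fin 5) ℝ) (hA : ∀ i, A i i = 0) :
    A.charpoly = X ^ 5 - C (edgeSum (edge A) 0 1 2 3 4) * X ^ 3 - C (triangleSum A) * X ^ 2 -
      C (quadSum A - matchingSum (edge A) 0 1 2 3 4) * X -
      C (pentagonSum A - edgeTriangleSum A) := by
  refine Polynomial.funext fun x => ?_
  rw [Matrix.eval_charpoly]
  simp only [eval_sub, eval_mul, eval_pow, eval_X, eval_C]
  simp only [edgeSum, matchingSum, triangleSum, quadSum, pentagonSum, edgeTriangleSum,
    edge, triangle, quad, pentagon]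
  simp [Matrix.det_succ_row_zero, Fin.sum_univ_succ, Fin.succAbove, hA]
  ring

theorem edge_comm {ι : Type*} (A : Matrix ι ι ℝ) (i j : ι) : edge A i j = edge A j i :=
  mul_comm _ _

section Matching

variable {ι : Type*} {w : ι → ι → ℝ}

/-- If one edge carries at least half of the total weight, then the weight of the other edges
times its own bounds the sum over pairs of disjoint edges. -/
theorem matchingSum_le_of_heavy (hw : ∀ i j, 0 ≤ w i j) (i j k l m : ι)
    (h : edgeSum w i j k l m ≤ 2 * w i j) :
    matchingSum w i j k l m ≤ w i j * (edgeSum w i j k l m - w i j) := by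
  unfold edgeSum at *
  unfold matchingSum
  set P := w i k + w i l + w i m with hP
  set Q := w j k + w j l + w j m with hQ
  set R := w k l + w k m + w l m with hR
  have hP0 : 0 ≤ P := add_nonneg (add_nonneg (hw _ _) (hw _ _)) (hw _ _)
  have hQ0 : 0 ≤ Q := add_nonneg (add_nonneg (hw _ _) (hw _ _)) (hw _ _)
  have h₁ : w i k * (w j l + w j m) + w i l * (w j k + w j m) + w i m * (w j k + w j l) ≤
      P * Q := by
    linarith [mul_nonneg (hw i k) (hw j k), mul_nonneg (hw i l) (hw j l),
      mul_nonneg (hw i m) (hw j m)]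
  have h₂ : (w i k + w j k) * w l m + (w i l + w j l) * w k m + (w i m + w j m) * w k l ≤
      (P + Q) * R := by
    linarith [mul_nonneg (add_nonneg (hw i k) (hw j k)) (add_nonneg (hw k l) (hw k m)),
      mul_nonneg (add_nonneg (hw i l) (hw j l)) (add_nonneg (hw k l) (hw l m)),
      mul_nonneg (add_nonneg (hw i m) (hw j m)) (add_nonneg (hw k m) (hw l m))]
  nlinarith [mul_nonneg (add_nonneg hP0 hQ0) (by linarith : 0 ≤ w i j - (P + Q + R)),
    mul_nonneg hP0 hQ0, sq_nonneg P, sq_nonneg Q]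

/-- Mantel's bound for the graph of disjoint edges, at an edge `i j` maximizing the weight of the
edges disjoint from it. -/
theorem four_mul_matchingSum_le_of_max (hw : ∀ i j, 0 ≤ w i j) (i j k l m : ι)
    (hik : w j l + w j m + w l m ≤ w k l + w k m + w l m)
    (hil : w j k + w j m + w k m ≤ w k l + w k m + w l m)
    (him : w j k + w j l + w k l ≤ w k l + w k m + w l m)
    (hjk : w i l + w i m + w l m ≤ w k l + w k m + w l m)
    (hjl : w i k + w i m + w k m ≤ w k l + w k m + w l m)
    (hjm : w i k + w i l + w k l ≤ w k l + w k m + w l m) :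
    4 * matchingSum w i j k l m ≤ edgeSum w i j k l m ^ 2 := by
  set R := w k l + w k m + w l m with hR
  have h : matchingSum w i j k l m ≤ R * (edgeSum w i j k l m - R) := by
    unfold matchingSum edgeSum
    rw [← hR]
    linarith [mul_le_mul_of_nonneg_left hik (hw i k), mul_le_mul_of_nonneg_left hil (hw i l),
      mul_le_mul_of_nonneg_left him (hw i m), mul_le_mul_of_nonneg_left hjk (hw j k),
      mul_le_mul_of_nonneg_left hjl (hw j l), mul_le_mul_of_nonneg_left hjm (hw j m),
      mul_nonneg (hw i k) (hw j l), mul_nonneg (hw i k) (hw j m), mul_nonneg (hw i l) (hw j k),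
      mul_nonneg (hw i l) (hw j m), mul_nonneg (hw i m) (hw j k), mul_nonneg (hw i m) (hw j l)]
  nlinarith [sq_nonneg (edgeSum w i j k l m - 2 * R)]

end Matching

section Necessity

variable {A : Matrix (Fin 5) (Fin 5) ℝ}

theorem edge_nonneg (hA : ∀ i j, 0 ≤ A i j) (i j : Fin 5) : 0 ≤ edge A i j :=
  mul_nonneg (hA _ _) (hA _ _)

theorem triangle_nonneg (hA : ∀ i j, 0 ≤ A i j) (i j k : Fin 5) : 0 ≤ triangle A i j k := by
  unfold triangle
  refine add_nonneg ?_ ?_ <;> exact mul_nonneg (mul_nonneg (hA _ _) (hA _ _)) (hA _ _)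

theorem edgeSum_nonneg (hA : ∀ i j, 0 ≤ A i j) : 0 ≤ edgeSum (edge A) 0 1 2 3 4 := by
  unfold edgeSum
  repeat' apply add_nonneg
  all_goals exact edge_nonneg hA _ _

theorem triangleSum_nonneg (hA : ∀ i j, 0 ≤ A i j) : 0 ≤ triangleSum A := by
  unfold triangleSum
  repeat' first | exact triangle_nonneg hA _ _ _ | apply add_nonneg

theorem quadSum_nonneg (hA : ∀ i j, 0 ≤ A i j) : 0 ≤ quadSum A := by
  unfold quadSum quad
  repeat' apply add_nonneg
  all_goals repeat' apply mul_nonneg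
  all_goals exact hA _ _

theorem pentagonSum_nonneg (hA : ∀ i j, 0 ≤ A i j) : 0 ≤ pentagonSum A := by
  unfold pentagonSum pentagon
  repeat' apply add_nonneg
  all_goals repeat' apply mul_nonneg
  all_goals exact hA _ _

/-- A common bound for the weights of all edges bounds `edgeTriangleSum`. -/
theorem edgeTriangleSum_le (hA : ∀ i j, 0 ≤ A i j) {r : ℝ} (hr : ∀ i j, i < j → edge A i j ≤ r) :
    edgeTriangleSum A ≤ r * triangleSum A := by
  unfold edgeTriangleSum triangleSum
  simp only [mul_add]
  repeat' apply add_le_add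
  all_goals exact mul_le_mul_of_nonneg_right (hr _ _ (by decide)) (triangle_nonneg hA _ _ _)

theorem edge_le_edgeSum (hA : ∀ i j, 0 ≤ A i j) {i j : Fin 5} (hij : i < j) :
    edge A i j ≤ edgeSum (edge A) 0 1 2 3 4 := by
  have h := edge_nonneg hA
  unfold edgeSum
  fin_cases i <;> fin_cases j <;> simp at hij ⊢ <;>
    linarith [h 0 1, h 0 2, h 0 3, h 0 4, h 1 2,
      h 1 3, h 1 4, h 2 3, h 2 4, h 3 4]

theorem matchingSum_le_of_edgeSum_le (hA : ∀ i j, 0 ≤ A i j) {i j : Fin 5} (hij : i < j)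
    (h : edgeSum (edge A) 0 1 2 3 4 ≤ 2 * edge A i j) :
    matchingSum (edge A) 0 1 2 3 4 ≤
      edge A i j * (edgeSum (edge A) 0 1 2 3 4 - edge A i j) := by
  obtain ⟨k, l, m, hS, hM⟩ : ∃ k l m,
      edgeSum (edge A) 0 1 2 3 4 = edgeSum (edge A) i j k l m ∧
      matchingSum (edge A) 0 1 2 3 4 = matchingSum (edge A) i j k l m := by
    unfold edgeSum matchingSum
    fin_cases i <;> fin_cases j <;> simp at hij ⊢
    · exact ⟨2, 3, 4, rfl, rfl⟩
    · refine ⟨1, 3, 4, ?_, ?_⟩ <;> simp only [edge] <;> ring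
    · refine ⟨1, 2, 4, ?_, ?_⟩ <;> simp only [edge] <;> ring
    · refine ⟨1, 2, 3, ?_, ?_⟩ <;> simp only [edge] <;> ring
    · refine ⟨0, 3, 4, ?_, ?_⟩ <;> simp only [edge] <;> ring
    · refine ⟨0, 2, 4, ?_, ?_⟩ <;> simp only [edge] <;> ring
    · refine ⟨0, 2, 3, ?_, ?_⟩ <;> simp only [edge] <;> ring
    · refine ⟨0, 1, 4, ?_, ?_⟩ <;> simp only [edge] <;> ring
    · refine ⟨0, 1, 3, ?_, ?_⟩ <;> simp only [edge] <;> ring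
    · refine ⟨0, 1, 2, ?_, ?_⟩ <;> simp only [edge] <;> ring
  rw [hS] at h ⊢
  rw [hM]
  exact matchingSum_le_of_heavy (edge_nonneg hA) i j k l m h

set_option linter.unusedSimpArgs false in
theorem four_mul_matchingSum_le (hA : ∀ i j, 0 ≤ A i j) :
    4 * matchingSum (edge A) 0 1 2 3 4 ≤ edgeSum (edge A) 0 1 2 3 4 ^ 2 := by
  set w := edge A with hw
  let N : Fin 10 → ℝ := ![
    w 2 3 + w 2 4 + w 3 4, w 1 3 + w 1 4 + w 3 4, w 1 2 + w 1 4 + w 2 4, w 1 2 + w 1 3 + w 2 3,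
    w 0 3 + w 0 4 + w 3 4, w 0 2 + w 0 4 + w 2 4, w 0 2 + w 0 3 + w 2 3, w 0 1 + w 0 4 + w 1 4,
    w 0 1 + w 0 3 + w 1 3, w 0 1 + w 0 2 + w 1 2]
  obtain ⟨e, -, he⟩ := Finset.exists_max_image Finset.univ N Finset.univ_nonempty
  have key := four_mul_matchingSum_le_of_max (edge_nonneg hA)
  have hN := fun f => he f (Finset.mem_univ f)
  have h₀ := hN 0
  have h₁ := hN 1
  have h₂ := hN 2
  have h₃ := hN 3
  have h₄ := hN 4
  have h₅ := hN 5
  have h₆ := hN 6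
  have h₇ := hN 7
  have h₈ := hN 8
  have h₉ := hN 9
  clear he hN
  have comm := edge_comm A
  rw [← hw] at key comm
  fin_cases e <;> simp [N] at h₀ h₁ h₂ h₃ h₄ h₅ h₆ h₇ h₈ h₉ <;>
    [have := key 0 1 2 3 4; have := key 0 2 1 3 4; have := key 0 3 1 2 4;
    have := key 0 4 1 2 3; have := key 1 2 0 3 4; have := key 1 3 0 2 4;
    have := key 1 4 0 2 3; have := key 2 3 0 1 4; have := key 2 4 0 1 3;
    have := key 3 4 0 1 2] <;>
  simp only [matchingSum, edgeSum,
    comm 1 0, comm 2 0, comm 3 0, comm 4 0, comm 2 1, comm 3 1, comm 4 1, comm 3 2,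
    comm 4 2, comm 4 3] at this ⊢ <;>
  refine le_trans (le_of_eq ?_) ((this ?_ ?_ ?_ ?_ ?_ ?_).trans (le_of_eq ?_)) <;>
  linarith

end Necessity

/-- The polynomial `X ^ 5 - a X ^ 3 - b X ^ 2 - c X - d` is the characteristic polynomial of a
nonnegative persymmetric matrix. -/
def PersymmetricRealizable (a b c d : ℝ) : Prop :=
  ∃ A : Matrix (Fin 5) (Fin 5) ℝ, (∀ i j, 0 ≤ A i j) ∧ (∀ i j, A i j = A j.rev i.rev) ∧
    A.charpoly = X ^ 5 - C a * X ^ 3 - C b * X ^ 2 - C c * X - C d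

section Sufficiency

variable {a b c d r s : ℝ}

theorem persymmetricRealizable_of_nonneg (ha : 0 ≤ a) (hb : 0 ≤ b) (hc : 0 ≤ c) (hd : 0 ≤ d) :
    PersymmetricRealizable a b c d := by
  refine ⟨!![0, 1, 0, 0, 0; 0, 0, 1, 0, 0; 0, a / 2, 0, 1, 0; c / 2, b, a / 2, 0, 1;
    d, c / 2, 0, 0, 0], fun i j => ?_, fun i j => ?_, ?_⟩
  · fin_cases i <;> fin_cases j <;> simp <;> linarith
  · fin_cases i <;> fin_cases j <;> simp
  · rw [charpoly_eq _ (fun i => by fin_cases i <;> rfl)]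
    congr <;>
      simp [edgeSum, matchingSum, triangleSum, quadSum, pentagonSum, edgeTriangleSum, edge,
        triangle, quad, pentagon]

theorem persymmetricRealizable_of_factor (hr : 0 ≤ r) (hs : 0 ≤ s) (hb : 0 ≤ b)
    (hd : 0 ≤ d + b * r) : PersymmetricRealizable (r + s) b (-(r * s)) d := by
  set u := √(d + b * r)
  have hu0 : 0 ≤ u := Real.sqrt_nonneg _
  have huu : u * u = d + b * r := Real.mul_self_sqrt hd
  refine ⟨!![0, 0, 0, 0, 1; 0, 0, 1, 0, 0; 0, s / 2, 0, 1, 0; u, b, s / 2, 0, 0;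
    r, u, 0, 0, 0], fun i j => ?_, fun i j => ?_, ?_⟩
  · fin_cases i <;> fin_cases j <;> simp <;> linarith
  · fin_cases i <;> fin_cases j <;> simp
  · rw [charpoly_eq _ (fun i => by fin_cases i <;> rfl)]
    congr <;>
      simp [edgeSum, matchingSum, triangleSum, quadSum, pentagonSum, edgeTriangleSum, edge,
        triangle, quad, pentagon] <;> linarith

theorem persymmetricRealizable_of_neg (hr : 0 ≤ r) (hs : 0 ≤ s) (hb : 0 < b)
    (hc : 0 ≤ c + r * s) : PersymmetricRealizable (r + s) b c (-(r * b)) := by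
  set u := √((c + r * s) / b)
  have hu0 : 0 ≤ u := Real.sqrt_nonneg _
  have huu : u * b * u = c + r * s := by
    rw [mul_right_comm, Real.mul_self_sqrt (div_nonneg hc hb.le), div_mul_cancel₀ _ hb.ne']
  have hsb : s / b * b = s := div_mul_cancel₀ _ hb.ne'
  have hsb0 : 0 ≤ s / b := div_nonneg hs hb.le
  refine ⟨!![0, 0, 0, 0, 1; u, 0, 1, s / b, 0; 0, 0, 0, 1, 0; 0, b, 0, 0, 0;
    r, 0, 0, u, 0], fun i j => ?_, fun i j => ?_, ?_⟩
  · fin_cases i <;> fin_cases j <;> simp <;> linarith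
  · fin_cases i <;> fin_cases j <;> simp
  · rw [charpoly_eq _ (fun i => by fin_cases i <;> rfl)]
    congr <;>
      simp [edgeSum, matchingSum, triangleSum, quadSum, pentagonSum, edgeTriangleSum, edge,
        triangle, quad, pentagon, hsb]
    linarith

end Sufficiency

theorem persymmetricRealizable_cycleSums (A : Matrix (Fin 5) (Fin 5) ℝ)
    (hA : ∀ i j, 0 ≤ A i j) :
    PersymmetricRealizable (edgeSum (edge A) 0 1 2 3 4) (triangleSum A)
      (quadSum A - matchingSum (edge A) 0 1 2 3 4) (pentagonSum A - edgeTriangleSum A) := by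
  have ha := edgeSum_nonneg hA
  have hb := triangleSum_nonneg hA
  have hq := quadSum_nonneg hA
  have hp := pentagonSum_nonneg hA
  have hM := four_mul_matchingSum_le hA
  have hheavy := fun i j hij => matchingSum_le_of_edgeSum_le hA (i := i) (j := j) hij
  have hle := fun i j hij => edge_le_edgeSum hA (i := i) (j := j) hij
  have hET := fun r => edgeTriangleSum_le hA (r := r)
  generalize edgeSum (edge A) 0 1 2 3 4 = a at *
  generalize triangleSum A = b at *
  generalize matchingSum (edge A) 0 1 2 3 4 = M at *
  obtain ⟨c, hc⟩ : ∃ c, c = quadSum A - M := ⟨_, rfl⟩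
  obtain ⟨d, hd⟩ : ∃ d, d = pentagonSum A - edgeTriangleSum A := ⟨_, rfl⟩
  rw [← hc, ← hd]
  rcases le_or_gt c 0 with hc0 | hc0
  · have hdisc : 0 ≤ a ^ 2 + 4 * c := by linarith
    set q := √(a ^ 2 + 4 * c)
    have hq0 : 0 ≤ q := Real.sqrt_nonneg _
    have hqq : q ^ 2 = a ^ 2 + 4 * c := Real.sq_sqrt hdisc
    have hqa : q ≤ a := abs_le_of_sq_le_sq' (by linarith) ha |>.2
    have hr : ∀ i j, i < j → edge A i j ≤ (a + q) / 2 := fun i j hij => by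
      rcases le_or_gt (2 * edge A i j) a with h | h
      · linarith
      · have h₁ := hheavy i j hij h.le
        have h₂ : 2 * edge A i j - a ≤ q :=
          Real.le_sqrt_of_sq_le (by nlinarith)
        linarith
    have := persymmetricRealizable_of_factor (r := (a + q) / 2) (s := (a - q) / 2) (d := d)
      (by linarith) (by linarith) hb (by linarith [hET _ hr])
    convert this using 1
    · ring
    · linarith
  · rcases le_or_gt 0 d with hd0 | hd0
    · exact persymmetricRealizable_of_nonneg ha hb hc0.le hd0
    · have hab : -d ≤ a * b := by linarith [hET a hle]
      have hb0 : 0 < b := hb.lt_of_ne (by rintro rfl; linarith)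
      have hr0 : 0 ≤ -d / b := div_nonneg (by linarith) hb
      have hra : -d / b ≤ a := (div_le_iff₀ hb0).2 hab
      have := persymmetricRealizable_of_neg (r := -d / b) (s := a - -d / b) (c := c) hr0
        (by linarith) hb0 (add_nonneg hc0.le (mul_nonneg hr0 (by linarith)))
      rwa [add_sub_cancel, div_mul_cancel₀ _ hb0.ne', neg_neg] at this

end ZeroDiagonalFive

/-- A realizable list of five complex numbers with zero sum is
persymmetrically realizable. -/
theorem stmt_0 (δ : Fin 5 → ℂ) (hs1 : ∑ i, δ i = 0)
    (hreal : ∃ A : Matrix (Fin 5) (Fin 5) ℝ, (∀ i j, 0 ≤ A i j) ∧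
      (Matrix.charpoly A).map (algebraMap ℝ ℂ) = ∏ i, (X - C (δ i))) :
    ∃ A : Matrix (Fin 5) (Fin 5) ℝ, (∀ i j, 0 ≤ A i j) ∧
      (∀ i j, A i j = A j.rev i.rev) ∧
      (Matrix.charpoly A).map (algebraMap ℝ ℂ) = ∏ i, (X - C (δ i)) := by
  obtain ⟨A, hA, hchar⟩ := hreal
  have htrace : A.trace = 0 := by
    have h := congrArg Polynomial.nextCoeff hchar
    rw [Polynomial.nextCoeff_map (algebraMap ℝ ℂ).injective, Polynomial.prod_X_sub_C_nextCoeff,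
      hs1, neg_zero, map_eq_zero] at h
    rw [Matrix.trace_eq_neg_charpoly_nextCoeff, h, neg_zero]
  have hdiag : ∀ i, A i i = 0 := fun i =>
    (Finset.sum_eq_zero_iff_of_nonneg fun i _ => hA i i).1 htrace i (Finset.mem_univ i)
  obtain ⟨B, hB, hpers, hBchar⟩ := ZeroDiagonalFive.persymmetricRealizable_cycleSums A hA
  exact ⟨B, hB, hpers, by rw [hBchar, ← ZeroDiagonalFive.charpoly_eq A hdiag, hchar]⟩
end

section
/- Let n ≥ 2, let δ be a positive real number, and let δ₂,…,δₙ be complex numbers, each with real part ≤ 0, such that the list (δ₂,…,δₙ) is closed under complex conjugation. Write sₖ for the k-th power sum of the n numbers δ,δ₂,…,δₙ. If s₁ ≥ 0 and s₂ − s₁² ≥ 0, then the list (δ,δ₂,…,δₙ) is persymmetrically realizable: there exists an n×n entrywise nonnegative persymmetric real matrix whose characteristic polynomial over ℂ equals (X−δ)∏ᵢ₌₂ⁿ(X−δᵢ). -/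
open Matrix Polynomial
open scoped ComplexOrder


/-- If `A` is upper Hessenberg with ones on the subdiagonal, and a polynomial row vector `u` with
`u 0 = 1` is carried by the characteristic matrix to a multiple `p` of the last unit vector, then
`p` is the characteristic polynomial of `A`. -/
theorem charpoly_eq_of_hessenberg {R : Type*} [CommRing R] {N : ℕ}
    (A : Matrix (Fin (N + 1)) (Fin (N + 1)) R)
    (hsub : ∀ j : Fin N, A j.succ j.castSucc = 1)
    (hzero : ∀ i j : Fin (N + 1), (j : ℕ) + 1 < i → A i j = 0)
    (u : Fin (N + 1) → R[X]) (hu : u 0 = 1) (p : R[X])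
    (h : u ᵥ* A.charmatrix = Pi.single (Fin.last N) p) : A.charpoly = p := by
  have hdet : (A.charmatrix.updateRow 0 (∑ k, u k • A.charmatrix k)).det = A.charpoly := by
    rw [Matrix.det_updateRow_sum, hu, one_smul, Matrix.charpoly]
  have hrow : ∑ k, u k • A.charmatrix k = Pi.single (Fin.last N) p := by
    rw [← h]
    ext1 j
    simp [Matrix.vecMul, dotProduct, Finset.sum_apply]
  have hminor : ((A.charmatrix.updateRow 0 (Pi.single (Fin.last N) p)).submatrix Fin.succ
      (Fin.last N).succAbove).det = (-1) ^ N := by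
    rw [Matrix.det_of_isUpperTriangular]
    · simp [hsub, Fin.castSucc_lt_succ.ne']
    · intro i j hij
      have hij' : (j : ℕ) < i := hij
      have hne : i.succ ≠ j.castSucc := by
        intro hc
        have := congrArg Fin.val hc
        simp at this
        omega
      simp [hne, hzero i.succ j.castSucc (by simpa using hij')]
  rw [← hdet, hrow, Matrix.det_succ_row_zero, Finset.sum_eq_single (Fin.last N)]
  · rw [hminor]
    simp only [Fin.val_last, updateRow_self, Pi.single_eq_same]
    rw [mul_comm _ p, mul_assoc, ← mul_pow]
    simp
  · intro j _ hj
    simp [hj]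
  · simp

/-- The two-by-two minors of the infinite Hurwitz matrix of the sequence `f` are nonnegative. -/
def HurwitzMinorsNonneg (f : ℤ → ℝ) : Prop :=
  ∀ (l : ℤ) (m p : ℕ), f l * f (l + 2 * m + p) ≤ f (l + 2 * m) * f (l + p)

theorem HurwitzMinorsNonneg.le {f : ℤ → ℝ} (hf : HurwitzMinorsNonneg f) {l x y h : ℤ}
    (hx : l ≤ x) (hy : l ≤ y) (hsum : l + h = x + y) (heven : (x - l) % 2 = 0) :
    f l * f h ≤ f x * f y := by
  obtain ⟨m, hm⟩ : ∃ m : ℕ, x = l + 2 * m := ⟨((x - l) / 2).toNat, by omega⟩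
  obtain ⟨p, hp⟩ : ∃ p : ℕ, y = l + p := ⟨(y - l).toNat, by omega⟩
  obtain rfl : h = l + 2 * m + p := by omega
  rw [hm, hp]
  exact hf l m p

/-- Multiplication by a quadratic polynomial with nonnegative coefficients preserves nonnegativity
of the two-by-two Hurwitz minors. -/
theorem HurwitzMinorsNonneg.quadratic {f : ℤ → ℝ} (hf : HurwitzMinorsNonneg f) {e a b : ℝ}
    (he : 0 ≤ e) (ha : 0 ≤ a) (hb : 0 ≤ b) :
    HurwitzMinorsNonneg fun k => e * f (k - 2) + a * f (k - 1) + b * f k := by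
  intro l m p
  obtain ⟨x, hx⟩ : ∃ x, x = l + 2 * (m : ℤ) := ⟨_, rfl⟩
  obtain ⟨y, hy⟩ : ∃ y, y = l + (p : ℤ) := ⟨_, rfl⟩
  obtain ⟨h, hh⟩ : ∃ h, h = l + 2 * (m : ℤ) + p := ⟨_, rfl⟩
  beta_reduce
  rw [← hh, ← hx, ← hy]
  rcases Nat.eq_zero_or_pos p with rfl | hp
  · obtain rfl : y = l := by simp [hy]
    obtain rfl : h = x := by simp [hh, hx]
    exact (mul_comm _ _).le
  have e0 : f l * f h ≤ f x * f y := hf.le (by omega) (by omega) (by omega) (by omega)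
  have e1 : f (l - 1) * f (h - 1) ≤ f (x - 1) * f (y - 1) :=
    hf.le (by omega) (by omega) (by omega) (by omega)
  have e2 : f (l - 2) * f (h - 2) ≤ f (x - 2) * f (y - 2) :=
    hf.le (by omega) (by omega) (by omega) (by omega)
  have a1 : f l * f (h - 1) ≤ f x * f (y - 1) :=
    hf.le (by omega) (by omega) (by omega) (by omega)
  have a2 : f (l - 1) * f h ≤ f (x - 1) * f y :=
    hf.le (by omega) (by omega) (by omega) (by omega)
  have b1 : f (l - 1) * f (h - 2) ≤ f (x - 1) * f (y - 2) :=
    hf.le (by omega) (by omega) (by omega) (by omega)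
  have b2 : f (l - 2) * f (h - 1) ≤ f (x - 2) * f (y - 1) :=
    hf.le (by omega) (by omega) (by omega) (by omega)
  have c : f (l - 2) * f h + f l * f (h - 2) ≤ f (x - 2) * f y + f x * f (y - 2) := by
    rcases Nat.lt_or_ge p 2 with hp2 | hp2
    · obtain rfl : p = 1 := by omega
      rcases Nat.eq_zero_or_pos m with rfl | hm
      · obtain rfl : x = l := by simp [hx]
        obtain rfl : h = y := by simp [hh, hy]
        rfl
      have c1 : f (l - 2) * f h ≤ f x * f (y - 2) :=
        hf.le (by omega) (by omega) (by omega) (by omega)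
      have c2 : f l * f (h - 2) ≤ f (x - 2) * f y :=
        hf.le (by omega) (by omega) (by omega) (by omega)
      linarith
    · have c1 : f (l - 2) * f h ≤ f (x - 2) * f y :=
        hf.le (by omega) (by omega) (by omega) (by omega)
      have c2 : f l * f (h - 2) ≤ f x * f (y - 2) :=
        hf.le (by omega) (by omega) (by omega) (by omega)
      linarith
  have t1 := mul_le_mul_of_nonneg_left e0 (mul_nonneg hb hb)
  have t2 := mul_le_mul_of_nonneg_left e1 (mul_nonneg ha ha)
  have t3 := mul_le_mul_of_nonneg_left e2 (mul_nonneg he he)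
  have t4 := mul_le_mul_of_nonneg_left (add_le_add a1 a2) (mul_nonneg ha hb)
  have t5 := mul_le_mul_of_nonneg_left (add_le_add b1 b2) (mul_nonneg he ha)
  have t6 := mul_le_mul_of_nonneg_left c (mul_nonneg he hb)
  linarith

/-- The coefficients of a polynomial, extended by zero to negative indices. -/
def intCoeff {R : Type*} [Semiring R] (q : R[X]) (k : ℤ) : R :=
  if k < 0 then 0 else q.coeff k.toNat

theorem intCoeff_natCast {R : Type*} [Semiring R] (q : R[X]) (k : ℕ) :
    intCoeff q k = q.coeff k := by
  simp [intCoeff]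

theorem intCoeff_one {R : Type*} [Semiring R] (k : ℤ) :
    intCoeff (1 : R[X]) k = if k = 0 then 1 else 0 := by
  simp only [intCoeff, coeff_one]
  split_ifs <;> first | rfl | omega

theorem intCoeff_X_mul {R : Type*} [Semiring R] (q : R[X]) (k : ℤ) :
    intCoeff (X * q) k = intCoeff q (k - 1) := by
  rcases lt_trichotomy k 0 with hk | rfl | hk
  · simp [intCoeff, hk, show k < 1 by omega]
  · simp [intCoeff]
  · obtain ⟨j, rfl⟩ : ∃ j : ℕ, k = (j : ℤ) + 1 := ⟨(k - 1).toNat, by omega⟩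
    rw [add_sub_cancel_right, intCoeff_natCast, ← Nat.cast_succ, intCoeff_natCast, coeff_X_mul]

theorem intCoeff_C_mul {R : Type*} [Semiring R] (a : R) (q : R[X]) (k : ℤ) :
    intCoeff (C a * q) k = a * intCoeff q k := by
  simp only [intCoeff, coeff_C_mul]
  split_ifs <;> simp

theorem intCoeff_add {R : Type*} [Semiring R] (p q : R[X]) (k : ℤ) :
    intCoeff (p + q) k = intCoeff p k + intCoeff q k := by
  simp only [intCoeff, coeff_add]
  split_ifs <;> simp

theorem intCoeff_quadratic_mul (e a b : ℝ) (q : ℝ[X]) (k : ℤ) :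
    intCoeff ((C e * X ^ 2 + C a * X + C b) * q) k =
      e * intCoeff q (k - 2) + a * intCoeff q (k - 1) + b * intCoeff q k := by
  have : (C e * X ^ 2 + C a * X + C b) * q = C e * (X * (X * q)) + C a * (X * q) + C b * q := by
    ring
  rw [this]
  simp only [intCoeff_add, intCoeff_C_mul, intCoeff_X_mul]
  congr 4
  ring

/-- Polynomials with nonnegative coefficients and nonnegative two-by-two Hurwitz minors. -/
def HurwitzLike (q : ℝ[X]) : Prop :=
  (∀ k, 0 ≤ intCoeff q k) ∧ HurwitzMinorsNonneg (intCoeff q)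

theorem HurwitzLike.one : HurwitzLike 1 := by
  refine ⟨fun k => ?_, fun l m p => ?_⟩
  · rw [intCoeff_one]; positivity
  · simp only [intCoeff_one]
    split_ifs <;> first | omega | norm_num

theorem HurwitzLike.quadratic_mul {q : ℝ[X]} (hq : HurwitzLike q) {e a b : ℝ}
    (he : 0 ≤ e) (ha : 0 ≤ a) (hb : 0 ≤ b) :
    HurwitzLike ((C e * X ^ 2 + C a * X + C b) * q) := by
  refine ⟨fun k => ?_, ?_⟩
  · rw [intCoeff_quadratic_mul]
    have := hq.1 (k - 2)
    have := hq.1 (k - 1)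
    have := hq.1 k
    positivity
  · rw [funext (intCoeff_quadratic_mul e a b q)]
    exact hq.2.quadratic he ha hb

/-- A self-conjugate multiset in the closed left half-plane is the root multiset of a real
polynomial with nonnegative two-by-two Hurwitz minors. -/
theorem exists_hurwitzLike (D : Multiset ℂ) (hre : ∀ z ∈ D, z.re ≤ 0)
    (hconj : D.map (starRingEnd ℂ) = D) :
    ∃ q : ℝ[X], HurwitzLike q ∧
      q.map (algebraMap ℝ ℂ) = (D.map fun z => X - C z).prod := by
  induction hc : D.card using Nat.strong_induction_on generalizing D with
  | _ N ih =>
    rcases D.empty_or_exists_mem with rfl | ⟨z, hz⟩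
    · exact ⟨1, .one, by simp⟩
    obtain ⟨E, rfl⟩ := Multiset.exists_cons_of_mem hz
    by_cases hreal : starRingEnd ℂ z = z
    · rw [Multiset.map_cons, hreal, Multiset.cons_inj_right] at hconj
      obtain ⟨q, hq, hmap⟩ := ih E.card (by simp [← hc]) E
        (fun w hw => hre w (Multiset.mem_cons_of_mem hw)) hconj rfl
      refine ⟨(C 0 * X ^ 2 + C 1 * X + C (-z.re)) * q, hq.quadratic_mul le_rfl zero_le_one
        (neg_nonneg.mpr (hre z hz)), ?_⟩
      rw [Multiset.map_cons, Multiset.prod_cons, ← hmap]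
      have : (z.re : ℂ) = z := Complex.conj_eq_iff_re.mp hreal
      simp [this, sub_eq_add_neg]
    · have hz' : starRingEnd ℂ z ∈ E := by
        have : starRingEnd ℂ z ∈ z ::ₘ E := by
          rw [← hconj]
          exact Multiset.mem_map_of_mem _ hz
        exact (Multiset.mem_cons.mp this).resolve_left hreal
      obtain ⟨F, rfl⟩ := Multiset.exists_cons_of_mem hz'
      rw [Multiset.map_cons, Multiset.map_cons, Complex.conj_conj, Multiset.cons_swap,
        Multiset.cons_inj_right, Multiset.cons_inj_right] at hconj
      obtain ⟨q, hq, hmap⟩ := ih F.card (by simp [← hc]) F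
        (fun w hw => hre w (Multiset.mem_cons_of_mem (Multiset.mem_cons_of_mem hw))) hconj rfl
      refine ⟨(C 1 * X ^ 2 + C (-(2 * z.re)) * X + C (Complex.normSq z)) * q,
        hq.quadratic_mul zero_le_one (by linarith [hre z hz]) (Complex.normSq_nonneg z), ?_⟩
      rw [Multiset.map_cons, Multiset.prod_cons, Multiset.map_cons, Multiset.prod_cons, ← hmap,
        ← mul_assoc, Polynomial.map_mul]
      congr 1
      have h1 : C ((2 * z.re : ℝ) : ℂ) = C z + C (starRingEnd ℂ z) := by
        rw [← C_add, Complex.add_conj]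
      have h2 : C ((Complex.normSq z : ℝ) : ℂ) = C z * C (starRingEnd ℂ z) := by
        rw [← C_mul, Complex.mul_conj]
      simp only [Polynomial.map_add, Polynomial.map_mul, Polynomial.map_pow, map_X, map_C,
        Complex.coe_algebraMap, Complex.ofReal_neg, C_neg (a := ((2 * z.re : ℝ) : ℂ)), h1, h2,
        C_1, Polynomial.map_one]
      ring

/-- If consecutive coefficients of a monic `q` of degree `N` have ratio at most `δ` in the two top
positions, then they do in all positions. -/
theorem HurwitzLike.coeff_le {q : ℝ[X]} (hq : HurwitzLike q) {δ : ℝ} {N : ℤ}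
    (hlead : intCoeff q N = 1) (h1 : intCoeff q (N - 1) ≤ δ)
    (h2 : intCoeff q (N - 2) ≤ δ * intCoeff q (N - 1)) (j : ℕ) :
    intCoeff q (N - j - 1) ≤ δ * intCoeff q (N - j) := by
  induction j using Nat.strong_induction_on with
  | _ j ih =>
    match j, ih with
    | 0, _ => simpa [hlead] using h1
    | 1, _ => simpa [sub_sub, one_add_one_eq_two] using h2
    | j + 2, ih =>
      have hstep := ih j (by omega)
      have hminor : intCoeff q (N - (j + 2 : ℕ) - 1) * intCoeff q (N - j) ≤
          intCoeff q (N - j - 1) * intCoeff q (N - (j + 2 : ℕ)) :=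
        hq.2.le (by omega) (by omega) (by omega) (by omega)
      have hnn := hq.1 (N - (j + 2 : ℕ))
      rcases (hq.1 (N - j)).eq_or_lt with hzero | hpos
      · have hz : intCoeff q (N - j - 1) = 0 :=
          le_antisymm (by rw [← hzero, mul_zero] at hstep; exact hstep) (hq.1 _)
        have hminor' : intCoeff q (N - (j + 2 : ℕ) - 1) * intCoeff q N ≤
            intCoeff q (N - j - 1) * intCoeff q (N - 2) :=
          hq.2.le (by omega) (by omega) (by omega) (by omega)
        rw [hlead, hz, mul_one, zero_mul] at hminor'
        have hδ : 0 ≤ δ := (hq.1 _).trans h1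
        exact hminor'.trans (by positivity)
      · refine le_of_mul_le_mul_right ?_ hpos
        calc _ ≤ _ := hminor
          _ ≤ δ * intCoeff q (N - j) * intCoeff q (N - (j + 2 : ℕ)) := by gcongr
          _ = _ := by ring

/-- The top three coefficients of `∏ (X - z)`, in terms of power sums. -/
theorem intCoeff_prod_X_sub_C {R : Type*} [CommRing R] (D : Multiset R) :
    (∀ k : ℤ, D.card < k → intCoeff (D.map fun z => X - C z).prod k = 0) ∧
    intCoeff (D.map fun z => X - C z).prod D.card = 1 ∧
    intCoeff (D.map fun z => X - C z).prod (D.card - 1) = -D.sum ∧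
    2 * intCoeff (D.map fun z => X - C z).prod (D.card - 2) =
      D.sum ^ 2 - (D.map (· ^ 2)).sum := by
  induction D using Multiset.induction_on with
  | empty =>
    simp only [Multiset.map_zero, Multiset.prod_zero, intCoeff_one]
    refine ⟨fun k hk => if_neg (by simp at hk; omega), by simp, by simp, by simp⟩
  | cons a D ih =>
    obtain ⟨i0, i1, i2, i3⟩ := ih
    have key (k : ℤ) : intCoeff ((a ::ₘ D).map fun z => X - C z).prod k =
        intCoeff (D.map fun z => X - C z).prod (k - 1) -
          a * intCoeff (D.map fun z => X - C z).prod k := by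
      rw [Multiset.map_cons, Multiset.prod_cons,
        show ∀ q : R[X], (X - C a) * q = X * q + C (-a) * q by intro q; rw [C_neg]; ring,
        intCoeff_add, intCoeff_C_mul, intCoeff_X_mul]
      ring
    simp only [key]
    simp only [Multiset.card_cons, Multiset.sum_cons, Multiset.map_cons, Nat.cast_add,
      Nat.cast_one]
    refine ⟨fun k hk => ?_, ?_, ?_, ?_⟩
    · rw [i0 k (by omega), i0 (k - 1) (by omega)]; ring
    · rw [add_sub_cancel_right, i1, i0 _ (by omega)]; ring
    · rw [add_sub_cancel_right, i1, i2]; ring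
    · rw [show (D.card : ℤ) + 1 - 2 - 1 = D.card - 2 by ring,
        show (D.card : ℤ) + 1 - 2 = D.card - 1 by ring, mul_sub, i3, i2]; ring

/-- The entry in row `i` and column `N - l` (indices starting at `0`) of the upper triangular part
of `persymmetricCompanion N w`. The weight `w k` sits on the diagonal `i + l = k`, as close to
`i = l` as possible: at `i = l` if `k` is even, split between two entries if `k` is odd. -/
noncomputable def bandWeight (N : ℕ) (w : ℕ → ℝ) (i l : ℕ) : ℝ :=
  if N < i + l then 0 else if i = l then w (i + l)
    else if i = l + 1 ∨ l = i + 1 then w (i + l) / 2 else 0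

theorem bandWeight_comm (N : ℕ) (w : ℕ → ℝ) (i l : ℕ) :
    bandWeight N w i l = bandWeight N w l i := by
  simp only [bandWeight, add_comm i l, eq_comm (a := i) (b := l), or_comm (a := i = l + 1)]

theorem bandWeight_nonneg {N : ℕ} {w : ℕ → ℝ} (hw : ∀ k ≤ N, 0 ≤ w k) (i l : ℕ) :
    0 ≤ bandWeight N w i l := by
  unfold bandWeight
  split_ifs with h
  · rfl
  · exact hw _ (by omega)
  · have := hw (i + l) (by omega)
    positivity
  · rfl

theorem bandWeight_eq_zero {N : ℕ} {w : ℕ → ℝ} {i l : ℕ}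
    (h : N < i + l ∨ l + 1 < i ∨ i + 1 < l) : bandWeight N w i l = 0 := by
  unfold bandWeight
  split_ifs <;> first | rfl | omega

theorem sum_antidiagonal_bandWeight {N : ℕ} (w : ℕ → ℝ) {k : ℕ} (hk : k ≤ N) :
    ∑ x ∈ Finset.HasAntidiagonal.antidiagonal k, bandWeight N w x.1 x.2 = w k := by
  rcases Nat.even_or_odd' k with ⟨m, rfl | rfl⟩
  · rw [Finset.sum_eq_single (m, m)]
    · simp [bandWeight, ← two_mul, hk]
    · rintro ⟨i, l⟩ hx hne
      rw [Finset.HasAntidiagonal.mem_antidiagonal] at hx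
      refine bandWeight_eq_zero ?_
      simp only [ne_eq, Prod.mk.injEq] at hne
      dsimp only at hx ⊢
      omega
    · intro h
      exact absurd (Finset.HasAntidiagonal.mem_antidiagonal.mpr (two_mul m).symm) h
  · rw [Finset.sum_eq_add (m, m + 1) (m + 1, m)]
    · have h1 : bandWeight N w m (m + 1) = w (2 * m + 1) / 2 := by
        rw [bandWeight, if_neg (by omega), if_neg (by omega), if_pos (by omega)]
        congr 2
        omega
      rw [bandWeight_comm N w (m + 1) m, h1, add_halves]
    · simp
    · rintro ⟨i, l⟩ hx hne
      rw [Finset.HasAntidiagonal.mem_antidiagonal] at hx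
      refine bandWeight_eq_zero ?_
      simp only [ne_eq, Prod.mk.injEq] at hne
      dsimp only at hx ⊢
      omega
    · intro h
      exact absurd (Finset.HasAntidiagonal.mem_antidiagonal.mpr (by dsimp only; omega)) h
    · intro h
      exact absurd (Finset.HasAntidiagonal.mem_antidiagonal.mpr (by dsimp only; omega)) h

theorem sum_sum_bandWeight (N : ℕ) (w : ℕ → ℝ) :
    ∑ l ∈ Finset.range (N + 1), ∑ i ∈ Finset.range (N + 1),
      C (bandWeight N w i l) * X ^ (i + l) = ∑ k ∈ Finset.range (N + 1), C (w k) * X ^ k := by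
  rw [Finset.sum_comm, ← Finset.sum_product',
    ← Finset.sum_filter_of_ne (p := fun x => x.1 + x.2 ≤ N),
    ← Finset.sum_fiberwise_of_maps_to (t := Finset.range (N + 1)) (g := fun x => x.1 + x.2)]
  · refine Finset.sum_congr rfl fun k hk => ?_
    rw [Finset.mem_range] at hk
    rw [← sum_antidiagonal_bandWeight w (Nat.lt_succ_iff.mp hk), map_sum, Finset.sum_mul]
    refine Finset.sum_congr ?_ fun x hx => ?_
    · ext x
      simp only [Finset.mem_filter, Finset.mem_product, Finset.mem_range,
        Finset.HasAntidiagonal.mem_antidiagonal]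
      omega
    · rw [Finset.HasAntidiagonal.mem_antidiagonal.mp hx]
  · intro x hx
    simp only [Finset.mem_filter] at hx
    exact Finset.mem_range.mpr (by omega)
  · intro x _ hx
    by_contra h
    exact hx (by rw [bandWeight_eq_zero (by omega), C_0, zero_mul])

/-- A persymmetric variant of the companion matrix: ones on the subdiagonal, and the weights `w k`
placed above it symmetrically about the antidiagonal. -/
noncomputable def persymmetricCompanion (N : ℕ) (w : ℕ → ℝ) :
    Matrix (Fin (N + 1)) (Fin (N + 1)) ℝ :=
  of fun i j => (if (i : ℕ) = j + 1 then 1 else 0) + bandWeight N w i (N - j)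

/-- Explicit form of `leadingPoly N w i` for the rows `i` of `persymmetricCompanion N w` that have a
nonzero entry on or above the diagonal (see `bandWeight_mul_rowPoly`). -/
noncomputable def rowPoly (N : ℕ) (w : ℕ → ℝ) (i : ℕ) : ℝ[X] :=
  X ^ i - if i = N / 2 + 1 then C (bandWeight N w (N / 2 + 1) (N / 2)) * X ^ (N / 2) else 0

/-- The characteristic polynomials of the leading principal blocks of
`persymmetricCompanion N w`. -/
noncomputable def leadingPoly (N : ℕ) (w : ℕ → ℝ) : ℕ → ℝ[X]
  | 0 => 1
  | j + 1 => X * leadingPoly N w j -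
      ∑ i ∈ Finset.range (N + 1), C (bandWeight N w i (N - j)) * rowPoly N w i

theorem leadingPoly_eq_X_pow (N : ℕ) (w : ℕ → ℝ) {j : ℕ} (hj : j ≤ N / 2) :
    leadingPoly N w j = X ^ j := by
  induction j with
  | zero => rw [leadingPoly, pow_zero]
  | succ j ih =>
    rw [leadingPoly, ih (by omega), Finset.sum_eq_zero, sub_zero, pow_succ']
    intro i _
    rw [bandWeight_eq_zero (by omega), C_0, zero_mul]

theorem bandWeight_mul_rowPoly (N : ℕ) (w : ℕ → ℝ) (i l : ℕ) :
    C (bandWeight N w i l) * rowPoly N w i = C (bandWeight N w i l) * leadingPoly N w i := by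
  rcases Nat.lt_or_ge (N / 2) i with hi | hi
  · by_cases h : i = N / 2 + 1 ∧ l = N / 2 ∧ N = 2 * (N / 2) + 1
    · obtain ⟨rfl, rfl, hN⟩ := h
      congr 1
      rw [leadingPoly, leadingPoly_eq_X_pow N w le_rfl, rowPoly, if_pos rfl, pow_succ',
        Finset.sum_eq_single (N / 2)]
      · rw [show N - N / 2 = N / 2 + 1 by omega, bandWeight_comm, rowPoly, if_neg (by omega),
          sub_zero]
      · intro i _ hi
        rw [bandWeight_eq_zero (by omega), C_0, zero_mul]
      · intro h
        exact absurd (Finset.mem_range.mpr (by omega)) h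
    · rw [bandWeight_eq_zero (by omega), C_0, zero_mul, zero_mul]
  · rw [leadingPoly_eq_X_pow N w hi, rowPoly, if_neg (by omega), sub_zero]

theorem leadingPoly_eq_sum (N : ℕ) (w : ℕ → ℝ) (j : ℕ) :
    leadingPoly N w j = X ^ j - ∑ k ∈ Finset.range j, X ^ (j - 1 - k) *
      ∑ i ∈ Finset.range (N + 1), C (bandWeight N w i (N - k)) * rowPoly N w i := by
  induction j with
  | zero => simp [leadingPoly]
  | succ j ih =>
    rw [leadingPoly, ih, Finset.sum_range_succ _ j, mul_sub, Finset.mul_sum, pow_succ', sub_sub]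
    rw [show j + 1 - 1 - j = 0 by omega, pow_zero, one_mul]
    congr 2
    refine Finset.sum_congr rfl fun k hk => ?_
    rw [Finset.mem_range] at hk
    rw [← mul_assoc, ← pow_succ', show j + 1 - 1 - k = j - 1 - k + 1 by omega]

theorem leadingPoly_top {N : ℕ} (hN : 1 ≤ N) (w : ℕ → ℝ) :
    leadingPoly N w (N + 1) = X ^ (N + 1) - ∑ k ∈ Finset.range (N + 1), C (w k) * X ^ k +
      C (bandWeight N w (N / 2 + 1) (N / 2) ^ 2) * X ^ (2 * (N / 2)) := by
  have hcorr : ∑ l ∈ Finset.range (N + 1), ∑ i ∈ Finset.range (N + 1),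
      X ^ l * (C (bandWeight N w i l) * if i = N / 2 + 1 then
        C (bandWeight N w (N / 2 + 1) (N / 2)) * X ^ (N / 2) else 0) =
      C (bandWeight N w (N / 2 + 1) (N / 2) ^ 2) * X ^ (2 * (N / 2)) := by
    rw [Finset.sum_eq_single (N / 2), Finset.sum_eq_single (N / 2 + 1), if_pos rfl]
    · rw [C_pow]; ring
    · intro i _ hi
      rw [if_neg hi, mul_zero, mul_zero]
    · intro h
      exact absurd (Finset.mem_range.mpr (by omega)) h
    · intro l _ hl
      refine Finset.sum_eq_zero fun i _ => ?_
      split_ifs with hi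
      · rw [bandWeight_eq_zero (by omega), C_0, zero_mul, mul_zero]
      · rw [mul_zero, mul_zero]
    · intro h
      exact absurd (Finset.mem_range.mpr (by omega)) h
  rw [leadingPoly_eq_sum, ← sum_sum_bandWeight, ← hcorr, ← Finset.sum_range_reflect, sub_add,
    ← Finset.sum_sub_distrib]
  congr 1
  refine Finset.sum_congr rfl fun l hl => ?_
  rw [Finset.mem_range] at hl
  rw [show N + 1 - 1 - (N + 1 - 1 - l) = l by omega, show N - (N + 1 - 1 - l) = l by omega,
    Finset.mul_sum, ← Finset.sum_sub_distrib]
  refine Finset.sum_congr rfl fun i _ => ?_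
  rw [rowPoly]
  ring

theorem charpoly_persymmetricCompanion (N : ℕ) (w : ℕ → ℝ) :
    (persymmetricCompanion N w).charpoly = leadingPoly N w (N + 1) := by
  refine charpoly_eq_of_hessenberg _ (fun j => ?_) (fun i j hij => ?_)
    (fun i => leadingPoly N w i) ?_ _ ?_
  · simp [persymmetricCompanion, bandWeight_eq_zero (N := N) (w := w) (i := j + 1) (l := N - j)
      (by omega)]
  · simp [persymmetricCompanion, hij.ne',
      bandWeight_eq_zero (N := N) (w := w) (i := i) (l := N - j) (by omega)]
  · simp [leadingPoly]
  · ext1 j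
    have hband : ∑ i : Fin (N + 1), leadingPoly N w i * C (bandWeight N w i (N - j)) =
        X * leadingPoly N w j - leadingPoly N w (j + 1) := by
      rw [leadingPoly, sub_sub_cancel, Finset.sum_range]
      refine Finset.sum_congr rfl fun i _ => ?_
      rw [bandWeight_mul_rowPoly, mul_comm]
    have hshift : ∑ i : Fin (N + 1), leadingPoly N w i * C (if (i : ℕ) = j + 1 then 1 else 0) =
        if j = Fin.last N then 0 else leadingPoly N w (j + 1) := by
      split_ifs with h
      · refine Finset.sum_eq_zero fun i _ => ?_
        rw [if_neg (by subst h; simp; omega), C_0, mul_zero]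
      · have hj : (j : ℕ) + 1 < N + 1 := by
          have := Fin.val_lt_last h
          omega
        rw [Finset.sum_eq_single ⟨j + 1, hj⟩]
        · simp
        · intro i _ hi
          rw [if_neg (by simpa [Fin.ext_iff] using hi), C_0, mul_zero]
        · simp
    have hdiag : ∑ i : Fin (N + 1), leadingPoly N w i * Matrix.diagonal (fun _ => (X : ℝ[X])) i j =
        X * leadingPoly N w j := by
      simp [Matrix.diagonal_apply, mul_comm]
    simp only [Matrix.vecMul, dotProduct, charmatrix_apply, persymmetricCompanion, of_apply, C_add,
      mul_sub, mul_add, Finset.sum_sub_distrib, Finset.sum_add_distrib, hband, hshift, hdiag]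
    by_cases h : j = Fin.last N
    · subst h
      simp
    · simp [h]

theorem exists_persymmetric_charpoly_eq {N : ℕ} (hN : 1 ≤ N) {c : ℕ → ℝ}
    (hc : ∀ k ≤ N, 0 ≤ c k) :
    ∃ A : Matrix (Fin (N + 1)) (Fin (N + 1)) ℝ, (∀ i j, 0 ≤ A i j) ∧
      (∀ i j, A i j = A j.rev i.rev) ∧
      A.charpoly = X ^ (N + 1) - ∑ k ∈ Finset.range (N + 1), C (c k) * X ^ k := by
  set t : ℝ := if N = 2 * (N / 2) then 0 else c N / 2 with ht
  set w : ℕ → ℝ := fun k => c k + if k = 2 * (N / 2) then t ^ 2 else 0 with hw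
  have hw0 : ∀ k ≤ N, 0 ≤ w k := fun k hk => by
    have := hc k hk
    simp only [hw]
    positivity
  have hband : bandWeight N w (N / 2 + 1) (N / 2) = t := by
    rw [ht]
    split_ifs with h
    · exact bandWeight_eq_zero (by omega)
    · rw [bandWeight, if_neg (by omega), if_neg (by omega), if_pos (by omega),
        show N / 2 + 1 + N / 2 = N by omega]
      simp only [hw]
      rw [if_neg h, add_zero]
  refine ⟨persymmetricCompanion N w, fun i j => ?_, fun i j => ?_, ?_⟩
  · have := bandWeight_nonneg hw0 i (N - j)
    simp only [persymmetricCompanion, of_apply]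
    positivity
  · simp only [persymmetricCompanion, of_apply, Fin.val_rev]
    rw [bandWeight_comm]
    congr 2
    · rw [eq_iff_iff]
      omega
    · omega
    · omega
  · rw [charpoly_persymmetricCompanion, leadingPoly_top hN, hband]
    have : ∑ k ∈ Finset.range (N + 1), C (w k) * X ^ k =
        ∑ k ∈ Finset.range (N + 1), C (c k) * X ^ k + C (t ^ 2) * X ^ (2 * (N / 2)) := by
      simp only [hw, C_add, add_mul, Finset.sum_add_distrib]
      congr 1
      rw [Finset.sum_eq_single (2 * (N / 2)), if_pos rfl]
      · intro k _ hk
        rw [if_neg hk, C_0, zero_mul]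
      · intro h
        exact absurd (Finset.mem_range.mpr (by omega)) h
    rw [this]
    ring

theorem intCoeff_map {R S : Type*} [Semiring R] [Semiring S] (f : R →+* S) (q : R[X]) (k : ℤ) :
    intCoeff (q.map f) k = f (intCoeff q k) := by
  simp only [intCoeff, coeff_map]
  split_ifs <;> simp

/-- The coefficients of `(X - δ) * q` for monic `q` of degree `N`. -/
theorem X_sub_C_mul_eq {R : Type*} [CommRing R] {q : R[X]} {N : ℕ} (hlead : intCoeff q N = 1)
    (hdeg : ∀ k : ℤ, N < k → intCoeff q k = 0) (δ : R) :
    (X - C δ) * q = X ^ (N + 1) -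
      ∑ k ∈ Finset.range (N + 1), C (δ * intCoeff q k - intCoeff q (k - 1)) * X ^ k := by
  ext k
  have hk : ((X - C δ) * q).coeff k = intCoeff q (k - 1) - δ * intCoeff q k := by
    rw [sub_mul, coeff_sub, ← intCoeff_natCast (X * q), ← intCoeff_natCast (C δ * q),
      intCoeff_X_mul, intCoeff_C_mul]
  simp only [hk, coeff_sub, coeff_X_pow, finsetSum_coeff, coeff_C_mul, mul_ite, mul_one, mul_zero,
    Finset.sum_ite_eq, Finset.mem_range]
  rcases lt_trichotomy k (N + 1) with h | rfl | h
  · simp [h, h.ne]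
  · simp [hlead, hdeg]
  · rw [hdeg k (by omega), hdeg (k - 1) (by omega), if_neg (by omega), if_neg (by omega)]
    ring

/-- The general (order n) version: a positive Perron root together with
n-1 complex numbers with nonpositive real parts, closed under conjugation, with
s₁ ≥ 0 and s₂ - s₁² ≥ 0, is persymmetrically realizable. -/
theorem stmt_6 (n : ℕ) (hn : 2 ≤ n) (δ : ℝ) (hδ : 0 < δ)
    (d : Fin (n - 1) → ℂ) (hre : ∀ i, (d i).re ≤ 0)
    (hconj : Multiset.map (starRingEnd ℂ) (↑(List.ofFn d) : Multiset ℂ)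
      = (↑(List.ofFn d) : Multiset ℂ))
    (s : ℕ → ℂ) (hs : ∀ k, s k = (δ : ℂ) ^ k + ∑ i, d i ^ k)
    (h1 : 0 ≤ s 1) (h2 : 0 ≤ s 2 - (s 1) ^ 2) :
    ∃ A : Matrix (Fin n) (Fin n) ℝ, (∀ i j, 0 ≤ A i j) ∧
      (∀ i j, A i j = A j.rev i.rev) ∧
      (Matrix.charpoly A).map (algebraMap ℝ ℂ) =
        (X - C (δ : ℂ)) * ∏ i, (X - C (d i)) := by
  obtain ⟨N, rfl⟩ : ∃ N, n = N + 1 := ⟨n - 1, by omega⟩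
  set D : Multiset ℂ := (↑(List.ofFn d) : Multiset ℂ) with hD
  have hsum (f : ℂ → ℂ) : (D.map f).sum = ∑ i, f (d i) := by
    simp [hD, List.map_ofFn, List.sum_ofFn]
  have hprod : (D.map fun z => X - C z).prod = ∏ i, (X - C (d i)) := by
    simp [hD, List.map_ofFn, List.prod_ofFn]
  have hcard : D.card = N := by simp [hD]
  obtain ⟨q, hq, hmap⟩ := exists_hurwitzLike D
    (fun z hz => by
      obtain ⟨i, rfl⟩ := (List.mem_ofFn' d z).mp (Multiset.mem_coe.mp hz)
      exact hre i) hconj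
  obtain ⟨hdeg, hlead, hnext, hsecond⟩ := intCoeff_prod_X_sub_C D
  rw [hcard, ← hmap, intCoeff_map, Complex.coe_algebraMap] at hlead hnext hsecond
  simp only [hcard, ← hmap, intCoeff_map, Complex.coe_algebraMap] at hdeg
  rw [hsum] at hsecond
  have hD1 : D.sum = ∑ i, d i ^ 1 := by simpa using hsum id
  have hlead' : intCoeff q N = 1 := by exact_mod_cast hlead
  have hdeg' (k : ℤ) (hk : N < k) : intCoeff q k = 0 := by exact_mod_cast hdeg k hk
  have h1' : intCoeff q (N - 1) ≤ δ := by
    have : s 1 = ((δ - intCoeff q (N - 1) : ℝ) : ℂ) := by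
      rw [hs, ← hD1, pow_one, Complex.ofReal_sub]
      linear_combination hnext
    rw [this, Complex.zero_le_real] at h1
    linarith
  have h2' : intCoeff q (N - 2) ≤ δ * intCoeff q (N - 1) := by
    have : s 2 - s 1 ^ 2 =
        ((2 * (δ * intCoeff q (N - 1) - intCoeff q (N - 2)) : ℝ) : ℂ) := by
      rw [hs, hs, ← hD1]
      push_cast
      linear_combination hsecond - 2 * (δ : ℂ) * hnext
    rw [this, Complex.zero_le_real] at h2
    linarith
  obtain ⟨A, hA0, hApersymm, hA⟩ := exists_persymmetric_charpoly_eq (N := N) (by omega)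
    (c := fun k => δ * intCoeff q k - intCoeff q (k - 1)) (fun k hk => by
      have := hq.coeff_le hlead' h1' h2' (N - k)
      rw [Nat.cast_sub hk, sub_sub_cancel] at this
      exact sub_nonneg.mpr this)
  refine ⟨A, hA0, hApersymm, ?_⟩
  rw [hA, ← X_sub_C_mul_eq hlead' hdeg', Polynomial.map_mul, hmap, hprod]
  simp
end

section
/- Let δ, a, b, c, d be real numbers with δ > 0, a ≤ 0, b ≤ 0, c ≤ 0 and d ≥ 0, and assume the list Δ = (δ, a, b, c+id, c−id) is realizable. Then for every t > 0 the perturbed list Δ′ = (δ+t, a−t, b, c+i(d−t), c−i(d−t)) is realizable. -/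
open Matrix Polynomial

/-- A list of n complex numbers is realizable if it is the spectrum of an
entrywise nonnegative real matrix. -/
def Realizable {n : ℕ} (δ : Fin n → ℂ) : Prop :=
  ∃ A : Matrix (Fin n) (Fin n) ℝ, (∀ i j, 0 ≤ A i j) ∧
    (Matrix.charpoly A).map (algebraMap ℝ ℂ) = ∏ i, (X - C (δ i))

theorem trace_eq_sum_of_charpoly_eq_prod {n : ℕ} {A : Matrix (Fin n) (Fin n) ℂ} {δ : Fin n → ℂ}
    (h : A.charpoly = ∏ i, (X - C (δ i))) : A.trace = ∑ i, δ i := by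
  rw [trace_eq_neg_charpoly_nextCoeff, h, prod_X_sub_C_nextCoeff, neg_neg]

theorem charpoly_sq_eq_prod {n : ℕ} {A : Matrix (Fin n) (Fin n) ℂ} {δ : Fin n → ℂ}
    (h : A.charpoly = ∏ i, (X - C (δ i))) : (A ^ 2).charpoly = ∏ i, (X - C (δ i ^ 2)) := by
  refine Polynomial.funext fun z => ?_
  obtain ⟨x, rfl⟩ := IsAlgClosed.exists_pow_nat_eq z zero_lt_two
  have hx (y : ℂ) : (scalar (Fin n) y - A).det = ∏ i, (y - δ i) := by
    rw [← eval_charpoly, h, eval_prod]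
    simp
  have hfac : scalar (Fin n) (x ^ 2) - A ^ 2 =
      (scalar (Fin n) x - A) * -(scalar (Fin n) (-x) - A) := by
    have hcomm : Commute (scalar (Fin n) x) A :=
      scalar_commute x (fun y => Commute.all x y) A
    rw [map_neg, map_pow, neg_sub, sub_neg_eq_add, add_comm A, sub_mul, mul_add, mul_add,
      hcomm.eq, sq, sq]
    abel
  rw [eval_charpoly, hfac, det_mul, det_neg, hx, hx, eval_prod, ← Finset.card_univ,
    ← Finset.prod_const, ← Finset.prod_mul_distrib, ← Finset.prod_mul_distrib]
  refine Finset.prod_congr rfl fun i _ => ?_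
  simp
  ring

theorem sq_trace_le_card_mul_trace_sq {n : ℕ} {A : Matrix (Fin n) (Fin n) ℝ}
    (hA : ∀ i j, 0 ≤ A i j) : A.trace ^ 2 ≤ n * (A ^ 2).trace := by
  have hcs := sq_sum_le_card_mul_sum_sq (s := Finset.univ) (f := fun i => A i i)
  rw [Finset.card_fin] at hcs
  refine hcs.trans (mul_le_mul_of_nonneg_left (Finset.sum_le_sum fun i _ => ?_) n.cast_nonneg)
  rw [diag_apply, sq A, mul_apply, sq]
  exact Finset.single_le_sum (f := fun j => A i j * A j i)
    (fun j _ => mul_nonneg (hA i j) (hA j i)) (Finset.mem_univ i)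

theorem charpoly_shifted_companion (α k₀ k₁ k₂ k₃ : ℝ) :
    (!![α, 1, 0, 0, 0; 0, α, 1, 0, 0; 0, 0, α, 1, 0; 0, 0, 0, α, 1; k₀, k₁, k₂, k₃, α] :
      Matrix (Fin 5) (Fin 5) ℝ).charpoly =
    (X - C α) ^ 5 - C k₃ * (X - C α) ^ 3 - C k₂ * (X - C α) ^ 2 - C k₁ * (X - C α) - C k₀ := by
  simp [charpoly, charmatrix, det_succ_row_zero, Fin.sum_univ_succ, Fin.succAbove]
  ring

/-- A list with four members of nonpositive real part is realized by a scalar shift of a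
companion matrix as soon as its first two power sums satisfy `0 ≤ s₁` and `s₁² ≤ 5 s₂`. -/
theorem realizable_of_trace_conditions {δ a b c d : ℝ} (ha : a ≤ 0) (hb : b ≤ 0) (hc : c ≤ 0)
    (hs : 0 ≤ δ + a + b + 2 * c)
    (hs' : (δ + a + b + 2 * c) ^ 2 ≤ 5 * (δ ^ 2 + a ^ 2 + b ^ 2 + 2 * (c ^ 2 - d ^ 2))) :
    Realizable ![(δ : ℂ), (a : ℂ), (b : ℂ), (c : ℂ) + d * Complex.I,
      (c : ℂ) - d * Complex.I] := by
  obtain ⟨α, hα⟩ : ∃ α, α = (δ + a + b + 2 * c) / 5 := ⟨_, rfl⟩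
  have hα0 : 0 ≤ α := by rw [hα]; positivity
  obtain ⟨u, hu⟩ : ∃ u, u = α - a := ⟨_, rfl⟩
  obtain ⟨v, hv⟩ : ∃ v, v = α - b := ⟨_, rfl⟩
  obtain ⟨w, hw⟩ : ∃ w, w = α - c := ⟨_, rfl⟩
  have hu0 : 0 ≤ u := by linarith
  have hv0 : 0 ≤ v := by linarith
  have hw0 : 0 ≤ w := by linarith
  obtain rfl : δ = α + (u + v + 2 * w) := by linarith
  obtain rfl : a = α - u := by linarith
  obtain rfl : b = α - v := by linarith
  obtain rfl : c = α - w := by linarith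
  have h3 : 0 ≤ (u + v + 2 * w) ^ 2 - (u * v + 2 * w * (u + v) + w ^ 2 + d ^ 2) := by
    nlinarith
  have h2 : 0 ≤ (u + v + 2 * w) * (u * v + 2 * w * (u + v) + w ^ 2 + d ^ 2)
      - (2 * u * v * w + (u + v) * (w ^ 2 + d ^ 2)) := by
    ring_nf; positivity
  have h1 : 0 ≤ (u + v + 2 * w) * (2 * u * v * w + (u + v) * (w ^ 2 + d ^ 2))
      - u * v * (w ^ 2 + d ^ 2) := by
    ring_nf; positivity
  have h0 : 0 ≤ (u + v + 2 * w) * (u * v * (w ^ 2 + d ^ 2)) := by positivity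
  refine ⟨_, ?_, (congrArg _ (charpoly_shifted_companion α
    ((u + v + 2 * w) * (u * v * (w ^ 2 + d ^ 2)))
    ((u + v + 2 * w) * (2 * u * v * w + (u + v) * (w ^ 2 + d ^ 2)) - u * v * (w ^ 2 + d ^ 2))
    ((u + v + 2 * w) * (u * v + 2 * w * (u + v) + w ^ 2 + d ^ 2)
      - (2 * u * v * w + (u + v) * (w ^ 2 + d ^ 2)))
    ((u + v + 2 * w) ^ 2 - (u * v + 2 * w * (u + v) + w ^ 2 + d ^ 2)))).trans ?_⟩
  · intro i j
    fin_cases i <;> fin_cases j <;> first | exact le_rfl | exact zero_le_one | assumption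
  · refine Polynomial.funext fun z => ?_
    simp [Fin.prod_univ_succ]
    linear_combination ((z - (α + (u + v + 2 * w))) * (z - (α - u)) * (z - (α - v)) * d ^ 2) *
      Complex.I_sq

theorem trace_conditions_of_realizable {δ a b c d : ℝ}
    (h : Realizable ![(δ : ℂ), (a : ℂ), (b : ℂ), (c : ℂ) + d * Complex.I,
      (c : ℂ) - d * Complex.I]) :
    0 ≤ δ + a + b + 2 * c ∧
    (δ + a + b + 2 * c) ^ 2 ≤ 5 * (δ ^ 2 + a ^ 2 + b ^ 2 + 2 * (c ^ 2 - d ^ 2)) := by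
  obtain ⟨A, hA, hchar⟩ := h
  rw [← charpoly_map] at hchar
  have htr := trace_eq_sum_of_charpoly_eq_prod hchar
  have htr2 := trace_eq_sum_of_charpoly_eq_prod (charpoly_sq_eq_prod hchar)
  rw [← AddMonoidHom.map_trace] at htr
  rw [← Matrix.map_pow, ← AddMonoidHom.map_trace] at htr2
  have hs : A.trace = δ + a + b + 2 * c := by
    apply Complex.ofReal_injective
    rw [← Complex.coe_algebraMap, htr]
    simp [Fin.sum_univ_succ]
    ring
  have hs' : (A ^ 2).trace = δ ^ 2 + a ^ 2 + b ^ 2 + 2 * (c ^ 2 - d ^ 2) := by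
    apply Complex.ofReal_injective
    rw [← Complex.coe_algebraMap, htr2]
    simp [Fin.sum_univ_succ]
    linear_combination (2 * (d : ℂ) ^ 2) * Complex.I_sq
  rw [← hs, ← hs']
  exact ⟨Finset.sum_nonneg fun i _ => hA i i, by exact_mod_cast sq_trace_le_card_mul_trace_sq hA⟩

/-- Perturbation of a realizable list of five complex numbers with
Perron root δ, nonpositive reals a, b and a conjugate pair c ± id. -/
theorem stmt_12 (δ a b c d : ℝ) (hδ : 0 < δ) (ha : a ≤ 0) (hb : b ≤ 0)
    (hc : c ≤ 0) (hd : 0 ≤ d)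
    (hreal : Realizable ![(δ : ℂ), (a : ℂ), (b : ℂ), (c : ℂ) + d * Complex.I,
      (c : ℂ) - d * Complex.I]) :
    ∀ t : ℝ, 0 < t →
      Realizable ![((δ + t : ℝ) : ℂ), ((a - t : ℝ) : ℂ), (b : ℂ),
        (c : ℂ) + (d - t : ℝ) * Complex.I, (c : ℂ) - (d - t : ℝ) * Complex.I] := by
  intro t ht
  obtain ⟨hs, hs'⟩ := trace_conditions_of_realizable hreal
  refine realizable_of_trace_conditions (by linarith) hb hc (by linarith) ?_
  nlinarith [mul_nonneg ht.le (by linarith : 0 ≤ δ - a + 2 * d)]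
end
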